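/- Let (a_k)_{k=0}^∞ be a nonnegative sequence with a_0 > 0, a_1 > 0, a_2 > 0 and a_k = 0 for all k ≥ 3. Then (a_k) is a TP_∞-preserver if and only if the quadratic polynomial a_0 + a_1 z + a_2 z^2 has only real (necessarily negative) zeros, i.e., a_1^2 − 4 a_0 a_2 ≥ 0. Moreover, (a_k) maps every TP_∞ sequence to a TP_∞ sequence if and only if it maps every 2-times positive sequence to a TP_∞ sequence. -/

import Mathlib

/-- A real sequence `(a_k)` is totally positive (TP_∞) if all finite minors of the
infinite Toeplitz matrix `(a_{j-i})` (with `a_k = 0` for `k < 0`) are nonnegative. -/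
def IsTotallyPositive (a : ℕ → ℝ) : Prop :=
  ∀ (n : ℕ) (i j : Fin n → ℕ), StrictMono i → StrictMono j →
    0 ≤ (Matrix.of fun p q : Fin n => if i p ≤ j q then a (j q - i p) else 0).det

/-- A real sequence is `m`-times positive (TP_m) if all such minors of order at most `m`
are nonnegative. -/
def IsMultiplyPositive (m : ℕ) (a : ℕ → ℝ) : Prop :=
  ∀ (n : ℕ), n ≤ m → ∀ (i j : Fin n → ℕ), StrictMono i → StrictMono j →
    0 ≤ (Matrix.of fun p q : Fin n => if i p ≤ j q then a (j q - i p) else 0).det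

/-- A nonnegative sequence `(a_k)` is a TP_∞-preserver if for every totally positive
sequence `(b_k)`, the sequence `(a_k b_k)` is totally positive. -/
def IsTPPreserver (a : ℕ → ℝ) : Prop :=
  ∀ b : ℕ → ℝ, IsTotallyPositive b → IsTotallyPositive (fun k => a k * b k)

/-- Toeplitz entry. -/
def tz (a : ℕ → ℝ) (i j : ℕ) : ℝ := if i ≤ j then a (j - i) else 0

theorem tp_iff (a : ℕ → ℝ) : IsTotallyPositive a ↔
    ∀ (n : ℕ) (i j : Fin n → ℕ), StrictMono i → StrictMono j →
      0 ≤ (Matrix.of fun p q : Fin n => tz a (i p) (j q)).det := Iff.rfl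

theorem det_col_zero {n : ℕ} (M : Matrix (Fin (n+1)) (Fin (n+1)) ℝ)
    (h : ∀ p : Fin n, M p.succ 0 = 0) :
    M.det = M 0 0 * (M.submatrix Fin.succ Fin.succ).det := by
  rw [Matrix.det_succ_column_zero, Fin.sum_univ_succ]
  simp [h]

/-- A general criterion by induction. -/
theorem tp_of_cases (a : ℕ → ℝ) (ha : ∀ k, 0 ≤ a k)
    (h : ∀ i i' j : ℕ, i < i' → i' ≤ j → a (j - i') ≠ 0 → ∀ j', j ≤ j' → tz a i j' = tz a i' j') :
    IsTotallyPositive a := by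
  rw [tp_iff]
  intro n
  induction n with
  | zero => intro i j _ _; simp
  | succ n ih =>
    intro i j hi hj
    by_cases hc : ∀ p : Fin n, tz a (i p.succ) (j 0) = 0
    · rw [det_col_zero _ (by simpa using hc)]
      refine mul_nonneg ?_ ?_
      · simp only [Matrix.of_apply, tz]; split_ifs
        · exact ha _
        · exact le_rfl
      · exact ih (i ∘ Fin.succ) (j ∘ Fin.succ) (hi.comp (Fin.strictMono_succ))
          (hj.comp (Fin.strictMono_succ))
    · push Not at hc
      obtain ⟨p, hp⟩ := hc
      have hle : i p.succ ≤ j 0 := by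
        by_contra hh
        exact hp (by simp [tz, hh])
      have h0p : (0 : Fin (n+1)) ≠ p.succ := (Fin.succ_ne_zero p).symm
      rw [Matrix.det_zero_of_row_eq h0p]
      ext q
      refine h (i 0) (i p.succ) (j 0) (hi (Fin.succ_pos p)) hle ?_ (j q) (hj.monotone (Fin.zero_le q))
      simpa [tz, hle] using hp

theorem tp_one : IsTotallyPositive (fun _ => 1) := by
  refine tp_of_cases _ (fun _ => zero_le_one) ?_
  intro i i' j h1 h2 _ j' h3
  simp only [tz]
  rw [if_pos (by omega), if_pos (by omega)]

theorem tp_delta : IsTotallyPositive (fun k => if k = 0 then 1 else 0) := by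
  rw [tp_iff]
  intro n
  induction n with
  | zero => intro i j _ _; simp
  | succ n ih =>
    intro i j hi hj
    have hrec := ih (i ∘ Fin.succ) (j ∘ Fin.succ) (hi.comp (Fin.strictMono_succ))
          (hj.comp (Fin.strictMono_succ))
    rcases lt_or_ge (i 0) (j 0) with hlt | hge
    · rw [Matrix.det_eq_zero_of_row_eq_zero 0]
      intro q
      have := hj.monotone (Fin.zero_le q)
      simp only [Matrix.of_apply, tz]
      rw [if_pos (by omega), if_neg (by omega)]
    · rw [det_col_zero]
      · refine mul_nonneg ?_ hrec
        simp only [Matrix.of_apply, tz]; split_ifs <;> norm_num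
      · intro p
        have := hi (Fin.succ_pos p)
        simp only [Matrix.of_apply, tz]
        rw [if_neg (by omega)]

theorem tp_conv (b : ℕ → ℝ) (hb : IsTotallyPositive b) (r s : ℝ) (hr : 0 ≤ r) (hs : 0 ≤ s) :
    IsTotallyPositive (fun k => r * b k + s * (if k = 0 then 0 else b (k - 1))) := by
  rw [tp_iff] at hb ⊢
  intro n i j hi hj
  have hM : (Matrix.of fun p q : Fin n =>
      tz (fun k => r * b k + s * (if k = 0 then 0 else b (k - 1))) (i p) (j q))
      = (fun p => (fun q => r * tz b (i p) (j q))) + (fun p => (fun q => s * tz b (i p + 1) (j q))) := by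
    ext p q
    simp only [Matrix.of_apply, tz, Pi.add_apply]
    rcases lt_trichotomy (i p) (j q) with h | h | h
    · have e : j q - i p ≠ 0 := by omega
      have e1 : i p + 1 ≤ j q := h
      have e2 : j q - i p - 1 = j q - (i p + 1) := by omega
      simp [h.le, e, e1, e2]
    · simp [h]
    · have e : ¬ (i p ≤ j q) := by omega
      have e' : ¬ (i p + 1 ≤ j q) := by omega
      simp [e, e']
  rw [hM]
  change 0 ≤ (Matrix.detRowAlternating (R := ℝ) (n := Fin n)).toMultilinearMap (_ + _)
  rw [MultilinearMap.map_add_univ]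
  refine Finset.sum_nonneg fun S _ => ?_
  have hP : S.piecewise (fun p => (fun q => r * tz b (i p) (j q)))
        (fun p => (fun q => s * tz b (i p + 1) (j q)))
      = fun p => (if p ∈ S then r else s) •
        (fun q => tz b (if p ∈ S then i p else i p + 1) (j q)) := by
    funext p q
    by_cases hp : p ∈ S <;> simp [Finset.piecewise, hp]
  rw [hP, MultilinearMap.map_smul_univ]
  refine mul_nonneg (Finset.prod_nonneg fun p _ => by split_ifs <;> assumption) ?_
  change 0 ≤ (Matrix.of fun p q : Fin n => tz b (if p ∈ S then i p else i p + 1) (j q)).det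
  have hmono : Monotone (fun p => if p ∈ S then i p else i p + 1) := by
    intro p p' h
    rcases h.eq_or_lt with rfl | h
    · exact le_rfl
    · have := hi h
      dsimp only
      split_ifs <;> omega
  by_cases hinj : Function.Injective (fun p => if p ∈ S then i p else i p + 1)
  · exact hb n _ j (hmono.strictMono_of_injective hinj) hj
  · simp only [Function.Injective] at hinj
    push Not at hinj
    obtain ⟨p, p', he, hne⟩ := hinj
    rw [Matrix.det_zero_of_row_eq hne]
    ext q
    simp only [Matrix.of_apply]
    rw [he]

theorem factor (c0 c1 c2 : ℝ) (h0 : 0 ≤ c0) (h1 : 0 ≤ c1) (h2 : 0 ≤ c2)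
    (h : 4 * c0 * c2 ≤ c1 ^ 2) : ∃ p q r s : ℝ, 0 ≤ p ∧ 0 ≤ q ∧ 0 ≤ r ∧ 0 ≤ s ∧
      p * r = c0 ∧ p * s + q * r = c1 ∧ q * s = c2 := by
  rcases h0.eq_or_lt with h0 | h0
  · exact ⟨0, 1, c1, c2, le_rfl, zero_le_one, h1, h2, by simp [← h0], by simp, by simp⟩
  · have hD : 0 ≤ c1 ^ 2 - 4 * c0 * c2 := by linarith
    have hs := Real.sq_sqrt hD
    have hn := Real.sqrt_nonneg (c1 ^ 2 - 4 * c0 * c2)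
    have hle : Real.sqrt (c1 ^ 2 - 4 * c0 * c2) ≤ c1 := by
      apply Real.sqrt_le_iff.2 ⟨h1, by nlinarith [mul_nonneg h0.le h2]⟩
    set t := Real.sqrt (c1 ^ 2 - 4 * c0 * c2)
    refine ⟨1, (c1 - t) / (2 * c0), c0, (c1 + t) / 2, zero_le_one,
      div_nonneg (by linarith) (by linarith), h0.le, by linarith, by ring, ?_, ?_⟩
    · field_simp; ring
    · field_simp; nlinarith

theorem tp_quad (c : ℕ → ℝ) (h0 : 0 ≤ c 0) (h1 : 0 ≤ c 1) (h2 : 0 ≤ c 2)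
    (h3 : ∀ k, 3 ≤ k → c k = 0) (h : 4 * c 0 * c 2 ≤ c 1 ^ 2) : IsTotallyPositive c := by
  obtain ⟨p, q, r, s, hp, hq, hr, hs, e0, e1, e2⟩ := factor _ _ _ h0 h1 h2 h
  have := tp_conv _ (tp_conv _ tp_delta r s hr hs) p q hp hq
  convert this using 1
  funext k
  match k with
  | 0 => simp [e0]
  | 1 => simp [← e1]
  | 2 => simp [← e2]
  | k + 3 => simp [h3 (k+3) (by omega)]

theorem tp2_facts (b : ℕ → ℝ) (hb : IsMultiplyPositive 2 b) :
    (∀ k, 0 ≤ b k) ∧ b 0 * b 2 ≤ b 1 ^ 2 := by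
  constructor
  · intro k
    have := hb 1 (by norm_num) ![0] ![k] (Subsingleton.strictMono _) (Subsingleton.strictMono _)
    simpa using this
  · have := hb 2 le_rfl ![0, 1] ![1, 2] (by decide) (by decide)
    rw [Matrix.det_fin_two] at this
    simp at this
    nlinarith

theorem suff (a : ℕ → ℝ) (h0 : 0 < a 0) (h1 : 0 < a 1) (h2 : 0 < a 2)
    (h3 : ∀ k, 3 ≤ k → a k = 0) (h : a 1 ^ 2 - 4 * a 0 * a 2 ≥ 0)
    (b : ℕ → ℝ) (hb : IsMultiplyPositive 2 b) : IsTotallyPositive fun k => a k * b k := by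
  obtain ⟨hn, hq⟩ := tp2_facts b hb
  refine tp_quad _ (mul_nonneg h0.le (hn _)) (mul_nonneg h1.le (hn _)) (mul_nonneg h2.le (hn _))
    (fun k hk => by simp [h3 k hk]) ?_
  have e1 : 4 * a 0 * a 2 * (b 0 * b 2) ≤ 4 * a 0 * a 2 * b 1 ^ 2 :=
    mul_le_mul_of_nonneg_left hq (by positivity)
  have e2 : 4 * a 0 * a 2 * b 1 ^ 2 ≤ a 1 ^ 2 * b 1 ^ 2 :=
    mul_le_mul_of_nonneg_right (by linarith) (sq_nonneg _)
  nlinarith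

/-- The tridiagonal minor. -/
noncomputable def triD (a : ℕ → ℝ) (n : ℕ) : ℝ :=
  (Matrix.of fun p q : Fin n => tz a (p : ℕ) ((q : ℕ) + 1)).det

theorem triD_rec (a : ℕ → ℝ) (h3 : ∀ k, 3 ≤ k → a k = 0) (n : ℕ) :
    triD a (n + 2) = a 1 * triD a (n + 1) - a 0 * a 2 * triD a n := by
  unfold triD
  rw [Matrix.det_succ_column_zero, Fin.sum_univ_succ, Fin.sum_univ_succ, Finset.sum_eq_zero]
  · have hA : ((Matrix.of fun p q : Fin (n+2) => tz a (p : ℕ) ((q : ℕ) + 1)).submatrix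
        (Fin.succAbove 0) Fin.succ) = Matrix.of fun p q : Fin (n+1) => tz a (p : ℕ) ((q : ℕ) + 1) := by
      ext p q
      simp [tz]
    have hB : ((Matrix.of fun p q : Fin (n+2) => tz a (p : ℕ) ((q : ℕ) + 1)).submatrix
        (Fin.succAbove (Fin.succ 0)) Fin.succ).det =
        a 2 * (Matrix.of fun p q : Fin n => tz a (p : ℕ) ((q : ℕ) + 1)).det := by
      rw [← Matrix.det_transpose, det_col_zero]
      · rw [← Matrix.det_transpose]
        congr 1
        congr 1
        ext p q
        simp [tz]
      · intro p
        simp [tz, h3]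
    rw [hA, hB]
    simp [tz]
    ring
  · intro p _
    simp [tz]

theorem nec_rec (D : ℕ → ℝ) (u v : ℝ) (hu : 0 < u) (hv : 0 < v) (d0 : D 0 = 1) (d1 : D 1 = u)
    (hr : ∀ n, D (n+2) = u * D (n+1) - v * D n) (hn : ∀ n, 0 ≤ D n) : 0 ≤ u ^ 2 - 4 * v := by
  by_contra hneg
  push Not at hneg
  have hpos : ∀ n, 0 < D n := by
    intro n
    induction n with
    | zero => rw [d0]; exact one_pos
    | succ n ih =>
      rcases (hn (n+1)).eq_or_lt with h | h
      · have := hr n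
        have h2 := hn (n+2)
        rw [← h] at this
        nlinarith [mul_pos hv ih]
      · exact h
  have hstep : ∀ n, D (n+2) / D (n+1) ≤ D (n+1) / D n - (4 * v - u^2) / (4 * u) := by
    intro n
    have hA := hpos n
    have hB := hpos (n+1)
    have hBA : D (n+1) ≤ u * D n := by
      cases n with
      | zero => simp [d0, d1]
      | succ m => have := hr m; nlinarith [mul_pos hv (hpos m)]
    rw [hr n]
    have e : (u * D (n+1) - v * D n) / D (n+1) = D (n+1) / D n
        - (D (n+1)^2 - u * D (n+1) * D n + v * D n ^ 2) / (D n * D (n+1)) := by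
      field_simp; ring
    rw [e]
    have : (4 * v - u^2) / (4 * u) ≤
        (D (n+1)^2 - u * D (n+1) * D n + v * D n ^ 2) / (D n * D (n+1)) := by
      rw [div_le_div_iff₀ (by positivity) (by positivity)]
      have k1 : (4 * v - u^2) * (D n * D (n+1)) ≤ (4 * v - u^2) * (D n * (u * D n)) :=
        mul_le_mul_of_nonneg_left (mul_le_mul_of_nonneg_left hBA hA.le) (by linarith)
      nlinarith [mul_nonneg hu.le (sq_nonneg (2 * D (n+1) - u * D n))]
    linarith
  have hlin : ∀ n : ℕ, D (n+1) / D n ≤ u - n * ((4 * v - u^2) / (4 * u)) := by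
    intro n
    induction n with
    | zero => simp [d0, d1]
    | succ n ih => have := hstep n; push_cast; linarith
  have hδ : 0 < (4 * v - u^2) / (4 * u) := div_pos (by linarith) (by linarith)
  obtain ⟨n, hnn⟩ := exists_nat_gt (u / ((4 * v - u^2) / (4 * u)))
  rw [div_lt_iff₀ hδ] at hnn
  have := hlin n
  have := div_pos (hpos (n+1)) (hpos n)
  linarith

theorem nec (a : ℕ → ℝ) (h0 : 0 < a 0) (h1 : 0 < a 1) (h2 : 0 < a 2)
    (h3 : ∀ k, 3 ≤ k → a k = 0) (h : IsTPPreserver a) : a 1 ^ 2 - 4 * a 0 * a 2 ≥ 0 := by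
  have ht : IsTotallyPositive a := by simpa using h _ tp_one
  have := nec_rec (triD a) (a 1) (a 0 * a 2) h1 (mul_pos h0 h2) (by simp [triD])
    (by simp [triD, tz]) (triD_rec a h3)
    (fun n => ht n (fun p => (p : ℕ)) (fun q => (q : ℕ) + 1) (fun _ _ h => h)
      (fun p q h => by have : (p : ℕ) < q := h
                       dsimp only; omega))
  linarith

theorem quad_iff (x y w : ℝ) (hw : 0 < w) :
    (∀ z : ℂ, (x : ℂ) + (y : ℂ) * z + (w : ℂ) * z ^ 2 = 0 → ∃ t : ℝ, z = (t : ℂ)) ↔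
      y ^ 2 - 4 * x * w ≥ 0 := by
  constructor
  · intro h
    by_contra hneg
    push Not at hneg
    have hpos : 0 < -(y ^ 2 - 4 * x * w) := by linarith
    have hs := Real.sq_sqrt hpos.le
    have hp := Real.sqrt_pos.2 hpos
    set t := Real.sqrt (-(y ^ 2 - 4 * x * w))
    obtain ⟨u, hu⟩ := h ⟨-y / (2 * w), t / (2 * w)⟩ (by
      apply Complex.ext
      · simp [pow_two]; field_simp; nlinarith
      · simp [pow_two]; field_simp; ring)
    have := congrArg Complex.im hu
    simp at this
    rcases this with h | h <;> linarith
  · intro h z hz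
    refine ⟨z.re, Complex.ext (by simp) ?_⟩
    have e1 := congrArg Complex.re hz
    have e2 := congrArg Complex.im hz
    simp [pow_two] at e1 e2
    simp only [Complex.ofReal_im]
    by_contra hne
    have e3 : y + 2 * w * z.re = 0 := by
      apply mul_left_cancel₀ hne; linarith
    have : 0 < w ^ 2 * z.im ^ 2 := by positivity
    have ey : y = - (2 * w * z.re) := by linarith
    have e4 := congrArg (fun t => w * t) e1
    rw [ey] at h e4
    nlinarith

/-- three-term sequences. -/
theorem stmt_1 (a : ℕ → ℝ) (h0 : 0 < a 0) (h1 : 0 < a 1) (h2 : 0 < a 2)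
    (h3 : ∀ k, 3 ≤ k → a k = 0) :
    (IsTPPreserver a ↔
      ∀ z : ℂ, (a 0 : ℂ) + (a 1 : ℂ) * z + (a 2 : ℂ) * z ^ 2 = 0 → ∃ x : ℝ, z = (x : ℂ)) ∧
    ((∀ z : ℂ, (a 0 : ℂ) + (a 1 : ℂ) * z + (a 2 : ℂ) * z ^ 2 = 0 → ∃ x : ℝ, z = (x : ℂ)) ↔
      a 1 ^ 2 - 4 * a 0 * a 2 ≥ 0) ∧
    (IsTPPreserver a ↔
      ∀ b : ℕ → ℝ, IsMultiplyPositive 2 b → IsTotallyPositive fun k => a k * b k) := by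
  have hq := quad_iff (a 0) (a 1) (a 2) h2
  have hs := suff a h0 h1 h2 h3
  have hn := nec a h0 h1 h2 h3
  have ht : (∀ b : ℕ → ℝ, IsMultiplyPositive 2 b → IsTotallyPositive fun k => a k * b k) →
      IsTPPreserver a := fun h b hb => h b (fun n _ => hb n)
  exact ⟨⟨fun h => hq.2 (hn h), fun h => ht (hs (hq.1 h))⟩, hq, ⟨fun h => hs (hn h), ht⟩⟩
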